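/- Let {S_n}_{n≥0} be a positive real sequence satisfying S_n = a(n)S_{n−1} + b(n)S_{n−2} for n ≥ 2, where a, b are real-valued functions, and let N be a nonnegative integer with a(n) > 0 and b(n) < 0 for all n ≥ N. Suppose there exists a real-valued function g such that for all n ≥ N + 2: (i') a(n)/2 ≤ g(n) ≤ S_n/S_{n−1}; (ii') 4g(n)^3 − 3a(n)g(n)^2 − a(n+1)b(n) ≥ 0; (iii') g(n)^4 − a(n)g(n)^3 − a(n+1)b(n)g(n) − b(n)b(n+1) ≥ 0. Then for all n ≥ N + 2, (S_n/S_{n−1})^2 ≤ (S_{n−1}/S_{n−2})(S_{n+1}/S_n); that is, {S_n}_{n≥N} is ratio log-convex. -/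

import Mathlib

/-!
Put `x = S n / S (n-1)`, `y = S (n-1) / S (n-2)`, `z = S (n+1) / S n`. The recurrence gives
`(x - a n) y = b n < 0` and `x z = a (n+1) x + b (n+1)`, so `x ^ 2 ≤ y z` is equivalent to
`f x ≥ 0` for the quartic `f t = t ^ 4 - a n t ^ 3 - a (n+1) b n t - b n b (n+1)`.
Since `f'' t = 6 t (2 t - a n)` is nonnegative for `t ≥ a n / 2`, the assumptions `f (g n) ≥ 0` and
`f' (g n) ≥ 0` propagate to every `x ≥ g n`.
-/

/-- Taylor expansion at `g`: value, derivative and all higher coefficients of the quartic are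
nonnegative there, so the quartic is nonnegative to the right of `g`. -/
lemma quartic_nonneg {α β p q g x : ℝ} (hα : 0 < α) (hg : α / 2 ≤ g) (hx : g ≤ x)
    (h1 : 0 ≤ 4 * g ^ 3 - 3 * α * g ^ 2 - β * p)
    (h2 : 0 ≤ g ^ 4 - α * g ^ 3 - β * p * g - p * q) :
    0 ≤ x ^ 4 - α * x ^ 3 - β * p * x - p * q := by
  have hd : 0 ≤ x - g := by linarith
  have hg0 : 0 ≤ g := by linarith
  have e : x ^ 4 - α * x ^ 3 - β * p * x - p * q =
      (g ^ 4 - α * g ^ 3 - β * p * g - p * q)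
        + (4 * g ^ 3 - 3 * α * g ^ 2 - β * p) * (x - g)
        + 3 * g * (2 * g - α) * (x - g) ^ 2 + (4 * g - α) * (x - g) ^ 3 + (x - g) ^ 4 := by
    ring
  have c2 : 0 ≤ 2 * g - α := by linarith
  have c3 : 0 ≤ 4 * g - α := by linarith
  rw [e]
  positivity


/-- A criterion for the ratio log-convexity of a positive sequence satisfying a
three-term recurrence `S_n = a(n) S_{n-1} + b(n) S_{n-2}`. -/
theorem stmt_11 (S a b : ℕ → ℝ) (hpos : ∀ n, 0 < S n)
    (hrec : ∀ n : ℕ, 2 ≤ n → S n = a n * S (n - 1) + b n * S (n - 2))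
    (N : ℕ)
    (ha : ∀ n : ℕ, N ≤ n → 0 < a n)
    (hb : ∀ n : ℕ, N ≤ n → b n < 0)
    (g : ℕ → ℝ)
    (hi : ∀ n : ℕ, N + 2 ≤ n → a n / 2 ≤ g n ∧ g n ≤ S n / S (n - 1))
    (hii : ∀ n : ℕ, N + 2 ≤ n →
      0 ≤ 4 * g n ^ 3 - 3 * a n * g n ^ 2 - a (n + 1) * b n)
    (hiii : ∀ n : ℕ, N + 2 ≤ n →
      0 ≤ g n ^ 4 - a n * g n ^ 3 - a (n + 1) * b n * g n - b n * b (n + 1)) :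
    ∀ n : ℕ, N + 2 ≤ n →
      (S n / S (n - 1)) ^ 2 ≤ (S (n - 1) / S (n - 2)) * (S (n + 1) / S n) := by
  intro n hn
  obtain ⟨m, rfl⟩ : ∃ m, n = m + 2 := ⟨n - 2, by omega⟩
  have r1 := hrec (m + 2) (by omega)
  have r2 := hrec (m + 3) (by omega)
  obtain ⟨hg, hgx⟩ := hi (m + 2) hn
  have hp0 := hpos m
  have hp1 := hpos (m + 1)
  have hp2 := hpos (m + 2)
  have hb' := hb (m + 2) (by omega)
  have hf := quartic_nonneg (ha (m + 2) (by omega)) hg hgx (hii (m + 2) hn) (hiii (m + 2) hn)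
  simp only [show m + 2 - 1 = m + 1 by omega, show m + 2 - 2 = m by omega,
    show m + 3 - 1 = m + 2 by omega, show m + 3 - 2 = m + 1 by omega,
    show m + 2 + 1 = m + 3 by omega] at r1 r2 hf ⊢
  have hx : 0 < S (m + 2) / S (m + 1) := by positivity
  have hy : 0 < S (m + 1) / S m := by positivity
  have e1 : (S (m + 2) / S (m + 1) - a (m + 2)) * (S (m + 1) / S m) = b (m + 2) := by
    field_simp
    linarith
  have e2 : S (m + 2) / S (m + 1) * (S (m + 3) / S (m + 2)) =
      a (m + 3) * (S (m + 2) / S (m + 1)) + b (m + 3) := by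
    field_simp
    linarith
  generalize S (m + 2) / S (m + 1) = x at *
  generalize S (m + 1) / S m = y at *
  generalize S (m + 3) / S (m + 2) = z at *
  have hxa : x - a (m + 2) < 0 := by
    by_contra! h
    linarith [mul_nonneg h hy.le]
  have hprod : 0 ≤ ((x - a (m + 2)) * x) * (x ^ 2 - y * z) := by
    have : ((x - a (m + 2)) * x) * (x ^ 2 - y * z) =
        x ^ 4 - a (m + 2) * x ^ 3 - a (m + 3) * b (m + 2) * x - b (m + 2) * b (m + 3) := by
      linear_combination (-x * z) * e1 - b (m + 2) * e2
    rw [this]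
    exact hf
  by_contra! h
  exact absurd hprod (not_le.mpr (mul_neg_of_neg_of_pos (mul_neg_of_neg_of_pos hxa hx)
    (by linarith)))
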